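/- Let F be a totally real number field of degree r over ℚ, with real embeddings σ₁, …, σ_r : F → ℝ, and let δ ∈ 𝓞_F be a generator of the different ideal of F/ℚ. Let D_F > 0 denote the discriminant of F (positive since F is totally real). Then for every tuple z = (z₁,…,z_r) with Im(z_j) > 0 for all j, the theta series satisfies the transformation formula θ_F(z) = (∏_{j=1}^r (-i z_j)^{-1/2}) · D_F^{-1/2} · θ_F(w), where w = (w₁,…,w_r) with w_j = -1/(σ_j(δ)² z_j) (which again satisfies Im(w_j) > 0), and each power (-i z_j)^{-1/2} is the principal branch of the complex power. -/

import Mathlib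

open Complex NumberField

/-!
The embeddings turn `𝓞 F` into a lattice in `ℝ^r` of covolume `√D_F`, and `θ_F(z)` into the sum over
this lattice of the Gaussian `x ↦ exp (π i ∑ j, x j ^ 2 * z j)`, whose Fourier transform is
`∏ j, (-i z j)^(-1/2)` times the Gaussian at `-1 / z`. Since `∑ j, σ j (x * y)` is the trace of
`x * y`, the lattice dual to `𝓞 F` is the image of the inverse different `δ⁻¹ 𝓞 F`, and Poisson
summation becomes the transformation formula: the Gaussian at `-1 / z j` evaluated on `v / δ` is the
Gaussian at `-1 / (σ j δ ^ 2 * z j)` evaluated on `v`.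
-/

noncomputable section

section PoissonSummation

open MeasureTheory TopologicalSpace Filter Asymptotics UnitAddTorus
open scoped FourierTransform

variable {ι E : Type*}

/-- The inclusion of the lattice `ℤ^ι` into `ℝ^ι`. -/
def intVec : (ι → ℤ) →+ (ι → ℝ) :=
  (Int.castAddHom ℝ).compLeft ι

@[simp]
lemma intVec_apply (n : ι → ℤ) (i : ι) : intVec n i = n i :=
  rfl

lemma intVec_injective : Function.Injective (intVec (ι := ι)) :=
  Int.cast_injective.comp_left

/-- The covering map `ℝ^ι → (ℝ/ℤ)^ι`. -/
def toTorus : C(ι → ℝ, UnitAddTorus ι) where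
  toFun x i := x i

@[simp]
lemma toTorus_apply (x : ι → ℝ) (i : ι) : toTorus x i = (x i : UnitAddCircle) :=
  rfl

lemma toTorus_add_intVec (x : ι → ℝ) (n : ι → ℤ) : toTorus (x + intVec n) = toTorus x := by
  ext i
  simp

lemma isQuotientMap_toTorus : Topology.IsQuotientMap (toTorus (ι := ι)) :=
  (IsOpenQuotientMap.piMap fun _ => QuotientAddGroup.isOpenQuotientMap_mk).isQuotientMap

lemma exists_eq_add_intVec_of_toTorus_eq {x y : ι → ℝ} (h : toTorus x = toTorus y) :
    ∃ n : ι → ℤ, y = x + intVec n := by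
  have hi (i : ι) : ∃ k : ℤ, k • (1 : ℝ) = -x i + y i :=
    AddSubgroup.mem_zmultiples_iff.mp (QuotientAddGroup.eq.mp (congrFun h i))
  choose n hn using hi
  refine ⟨n, funext fun i => ?_⟩
  simpa [eq_neg_add_iff_add_eq, eq_comm] using hn i

section Periodization

variable [NormedAddCommGroup E]

/-- The sum of the translates of `f` by `ℤ^ι`; it is the junk value `0` when the series does not
converge locally uniformly. -/
def periodization (f : C(ι → ℝ, E)) : C(ι → ℝ, E) :=
  ∑' n : ι → ℤ, f.comp (ContinuousMap.addRight (intVec n))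

lemma periodization_add_intVec (f : C(ι → ℝ, E)) (x : ι → ℝ) (k : ι → ℤ) :
    periodization f (x + intVec k) = periodization f x := by
  by_cases h : Summable fun n : ι → ℤ => f.comp (ContinuousMap.addRight (intVec n))
  · rw [periodization, ← ContinuousMap.tsum_apply h, ← ContinuousMap.tsum_apply h,
      ← (Equiv.addLeft k).tsum_eq fun n => f.comp (ContinuousMap.addRight (intVec n)) x]
    simp [add_assoc]
  · simp [periodization, tsum_eq_zero_of_not_summable h]

lemma factorsThrough_periodization_toTorus (f : C(ι → ℝ, E)) :
    Function.FactorsThrough (periodization f) (toTorus (ι := ι)) := by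
  intro x y hxy
  obtain ⟨n, rfl⟩ := exists_eq_add_intVec_of_toTorus_eq hxy
  exact (periodization_add_intVec f x n).symm

/-- The function on the torus `(ℝ/ℤ)^ι` induced by the periodization of `f`. -/
def torusPeriodization (f : C(ι → ℝ, E)) : C(UnitAddTorus ι, E) :=
  isQuotientMap_toTorus.lift (periodization f) (factorsThrough_periodization_toTorus f)

@[simp]
lemma torusPeriodization_toTorus (f : C(ι → ℝ, E)) (x : ι → ℝ) :
    torusPeriodization f (toTorus x) = periodization f x :=
  DFunLike.congr_fun (isQuotientMap_toTorus.lift_comp _ (factorsThrough_periodization_toTorus f)) x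

end Periodization

/-- The half-open unit cube `(0, 1]^ι`, a fundamental domain for `ℤ^ι`. -/
def unitCube (ι : Type*) : Set (ι → ℝ) :=
  {x | ∀ i, x i ∈ Set.Ioc (0 : ℝ) 1}

lemma unitCube_subset_Icc : unitCube ι ⊆ Set.Icc 0 1 :=
  fun _ hx => ⟨fun i => (hx i).1.le, fun i => (hx i).2⟩

lemma existsUnique_add_intVec_mem_unitCube (x : ι → ℝ) :
    ∃! n : ι → ℤ, x + intVec n ∈ unitCube ι := by
  have hmem (n : ι → ℤ) : x + intVec n ∈ unitCube ι ↔ n = fun i => 1 - ⌈x i⌉ := by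
    rw [funext_iff]
    refine forall_congr' fun i => ?_
    rw [eq_sub_iff_add_eq', ← eq_sub_iff_add_eq, Int.ceil_eq_iff]
    simp only [Pi.add_apply, intVec_apply, Set.mem_Ioc]
    push_cast
    constructor <;> rintro ⟨h₁, h₂⟩ <;> constructor <;> linarith
  exact ⟨fun i => 1 - ⌈x i⌉, (hmem _).2 rfl, fun n hn => (hmem n).1 hn⟩

section Unfolding

lemma measurableSet_unitCube [Countable ι] : MeasurableSet (unitCube ι) :=
  MeasurableSet.univ_pi' fun _ => measurableSet_Ioc

variable [Fintype ι]

lemma isAddFundamentalDomain_unitCube :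
    IsAddFundamentalDomain (intVec (ι := ι)).range (unitCube ι) := by
  refine IsAddFundamentalDomain.mk' measurableSet_unitCube.nullMeasurableSet fun x => ?_
  obtain ⟨n, hn, huniq⟩ := existsUnique_add_intVec_mem_unitCube x
  refine ⟨⟨intVec n, n, rfl⟩, by simpa [AddSubgroup.vadd_def, add_comm] using hn, ?_⟩
  rintro ⟨_, k, rfl⟩ hk
  have : k = n := huniq k (by simpa [AddSubgroup.vadd_def, add_comm] using hk)
  simp [this]

variable [NormedAddCommGroup E]

lemma integrable_of_summable_norm_restrict_Icc {f : C(ι → ℝ, E)}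
    (hf : Summable fun n : ι → ℤ =>
      ‖(f.comp (ContinuousMap.addRight (intVec n))).restrict (Set.Icc 0 1)‖) :
    Integrable f := by
  let s (n : ι → ℤ) : Compacts (ι → ℝ) := ⟨Set.Icc (intVec n) (intVec n + 1), isCompact_Icc⟩
  refine integrable_of_summable_norm_restrict (s := s) ?_ ?_
  · refine hf.of_nonneg_of_le (fun n => by positivity) fun n => ?_
    have hvol : volume.real (s n : Set (ι → ℝ)) = 1 := by
      simp [s, measureReal_def, Real.volume_Icc_pi]
    rw [hvol, mul_one, ContinuousMap.norm_le _ (norm_nonneg _)]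
    rintro ⟨x, hx⟩
    have hx' : x - intVec n ∈ Set.Icc (0 : ι → ℝ) 1 :=
      ⟨sub_nonneg.2 hx.1, sub_le_iff_le_add'.2 hx.2⟩
    have hle : ‖f (x - intVec n + intVec n)‖ ≤ _ := ((f.comp (ContinuousMap.addRight
      (intVec n))).restrict (Set.Icc 0 1)).norm_coe_le_norm ⟨_, hx'⟩
    rwa [sub_add_cancel] at hle
  · refine Set.iUnion_eq_univ_iff.2 fun x => ?_
    obtain ⟨n, hn, -⟩ := existsUnique_add_intVec_mem_unitCube x
    have := unitCube_subset_Icc hn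
    refine ⟨-n, ?_⟩
    simpa [s, neg_le_iff_add_nonneg', le_neg_add_iff_add_le, add_comm] using this

variable [NormedSpace ℝ E]

lemma integral_eq_tsum_setIntegral_unitCube {f : (ι → ℝ) → E} (hf : Integrable f) :
    ∫ x, f x = ∑' n : ι → ℤ, ∫ x in unitCube ι, f (x + intVec n) := by
  have : Countable (intVec (ι := ι)).range := Set.countable_range (intVec (ι := ι))
  rw [isAddFundamentalDomain_unitCube.integral_eq_tsum'' f hf,
    ← (AddMonoidHom.ofInjective intVec_injective).toEquiv.tsum_eq]
  simp [AddSubgroup.vadd_def, add_comm, AddMonoidHom.ofInjective_apply]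

lemma setIntegral_unitCube_periodization [CompleteSpace E] {f : C(ι → ℝ, E)}
    (hf : ∀ K : Compacts (ι → ℝ), Summable fun n : ι → ℤ =>
      ‖(f.comp (ContinuousMap.addRight (intVec n))).restrict K‖) :
    ∫ x in unitCube ι, periodization f x = ∫ x, f x := by
  set I : Compacts (ι → ℝ) := ⟨Set.Icc 0 1, isCompact_Icc⟩
  have hint : Integrable f := integrable_of_summable_norm_restrict_Icc (hf I)
  have hfin : volume (unitCube ι) < ⊤ :=
    (measure_mono unitCube_subset_Icc).trans_lt isCompact_Icc.measure_lt_top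
  have : IsFiniteMeasure (volume.restrict (unitCube ι)) := isFiniteMeasure_restrict.2 hfin.ne
  have hbound (n : ι → ℤ) : ∫ x in unitCube ι, ‖f (x + intVec n)‖ ≤
      ‖(f.comp (ContinuousMap.addRight (intVec n))).restrict I‖ * volume.real (unitCube ι) := by
    refine (Real.le_norm_self _).trans (norm_setIntegral_le_of_norm_le_const hfin fun x hx => ?_)
    rw [norm_norm]
    exact ((f.comp (ContinuousMap.addRight (intVec n))).restrict I).norm_coe_le_norm
      ⟨x, unitCube_subset_Icc hx⟩
  rw [integral_eq_tsum_setIntegral_unitCube hint, integral_tsum_of_summable_integral_norm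
    (fun n => (hint.comp_add_right (intVec n)).integrableOn)
    (((hf I).mul_right _).of_nonneg_of_le (fun n => by positivity) hbound)]
  simp only [periodization, ← ContinuousMap.tsum_apply
    (ContinuousMap.summable_of_locally_summable_norm hf), ContinuousMap.comp_apply,
    ContinuousMap.coe_addRight]

end Unfolding

lemma isBigO_norm_restrict_comp_addRight {V : Type*} [NormedAddCommGroup V] [ProperSpace V]
    [NormedAddCommGroup E] (f : C(V, E)) {b : ℝ} (hb : 0 ≤ b)
    (hf : f =O[cocompact V] fun x => ‖x‖ ^ (-b)) (K : Compacts V) :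
    (fun x => ‖(f.comp (ContinuousMap.addRight x)).restrict K‖) =O[cocompact V]
      fun x => ‖x‖ ^ (-b) := by
  rw [← Metric.cobounded_eq_cocompact] at hf ⊢
  obtain ⟨C, hC, hfC⟩ := hf.exists_pos
  obtain ⟨R, -, hR⟩ := hasBasis_cobounded_norm.eventually_iff.1 hfC.bound
  obtain ⟨ρ, hρ, hK⟩ := K.isCompact.isBounded.exists_pos_norm_le
  refine IsBigO.of_bound (C * (1 / 2) ^ (-b))
    (hasBasis_cobounded_norm.eventually_iff.2 ⟨max (2 * ρ) (R + ρ), trivial, fun x hx => ?_⟩)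
  obtain ⟨hx₁, hx₂⟩ := max_le_iff.1 (Set.mem_ofPred.1 hx)
  rw [norm_norm, ContinuousMap.norm_le _ (by positivity)]
  rintro ⟨y, hy⟩
  have hxy : ‖x‖ - ρ ≤ ‖y + x‖ := by
    have := norm_sub_le (y + x) y
    rw [add_sub_cancel_left] at this
    linarith [hK y hy]
  calc ‖f (y + x)‖ ≤ C * ‖‖y + x‖ ^ (-b)‖ := hR (by simp only [Set.mem_ofPred_eq]; linarith)
    _ = C * ‖y + x‖ ^ (-b) := by rw [Real.norm_of_nonneg (by positivity)]
    _ ≤ C * (1 / 2 * ‖x‖) ^ (-b) := by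
      gcongr C * ?_
      exact Real.rpow_le_rpow_of_nonpos (by linarith) (by linarith) (by linarith)
    _ = C * (1 / 2) ^ (-b) * ‖‖x‖ ^ (-b)‖ := by
      rw [Real.mul_rpow (by positivity) (by positivity), Real.norm_of_nonneg (by positivity),
        mul_assoc]

lemma comp_toTorus_mul_comp_addRight (e : C(UnitAddTorus ι, ℂ)) (f : C(ι → ℝ, ℂ)) (n : ι → ℤ) :
    (e.comp toTorus * f).comp (ContinuousMap.addRight (intVec n)) =
      e.comp toTorus * f.comp (ContinuousMap.addRight (intVec n)) := by
  ext x
  simp [toTorus_add_intVec]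

lemma norm_restrict_comp_toTorus_mul_le (e : C(UnitAddTorus ι, ℂ)) (g : C(ι → ℝ, ℂ))
    (K : Compacts (ι → ℝ)) : ‖(e.comp toTorus * g).restrict K‖ ≤ ‖e‖ * ‖g.restrict K‖ := by
  refine (ContinuousMap.norm_le _ (by positivity)).2 fun x => ?_
  exact (norm_mul_le _ _).trans
    (mul_le_mul (e.norm_coe_le_norm _) ((g.restrict K).norm_coe_le_norm x) (norm_nonneg _)
      (norm_nonneg _))

lemma periodization_comp_toTorus_mul [Finite ι] (e : C(UnitAddTorus ι, ℂ)) {f : C(ι → ℝ, ℂ)}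
    (hf : Summable fun n : ι → ℤ => f.comp (ContinuousMap.addRight (intVec n))) :
    periodization (e.comp toTorus * f) = e.comp toTorus * periodization f := by
  simp only [periodization, comp_toTorus_mul_comp_addRight]
  exact hf.tsum_mul_left _

lemma tendsto_intVec_cofinite_cocompact [Finite ι] :
    Tendsto (intVec (ι := ι)) cofinite (cocompact (ι → ℝ)) := by
  rw [← coprodᵢ_cofinite, ← coprodᵢ_cocompact]
  exact Tendsto.pi_map_coprodᵢ fun _ => Int.tendsto_coe_cofinite

variable [Fintype ι]

lemma summable_norm_intVec_rpow {b : ℝ} (hb : Fintype.card ι < b) :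
    Summable fun n : ι → ℤ => ‖intVec n‖ ^ (-b) := by
  let B := (Pi.basisFun ℝ ι).restrictScalars ℤ
  have hrank : Module.finrank ℤ (Submodule.span ℤ (Set.range (Pi.basisFun ℝ ι))) =
      Fintype.card ι := Module.finrank_eq_card_basis B
  have hs := ZLattice.summable_norm_rpow (Submodule.span ℤ (Set.range (Pi.basisFun ℝ ι))) (-b)
    (by rw [hrank]; linarith)
  refine (B.equivFun.symm.toEquiv.summable_iff.2 hs).congr fun n => ?_
  have : ((B.equivFun.symm n : Submodule.span ℤ (Set.range (Pi.basisFun ℝ ι))) : ι → ℝ) =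
      intVec n := by
    classical
    ext i
    simp [B, Module.Basis.equivFun_symm_apply, Finset.sum_apply, Pi.single_apply]
  change ‖((B.equivFun.symm n : Submodule.span ℤ (Set.range (Pi.basisFun ℝ ι))) : ι → ℝ)‖ ^ (-b) = _
  rw [this]

lemma summable_comp_intVec_of_isBigO [NormedAddCommGroup E] [CompleteSpace E] {f : (ι → ℝ) → E}
    {b : ℝ} (hb : Fintype.card ι < b) (hf : f =O[cocompact (ι → ℝ)] fun x => ‖x‖ ^ (-b)) :
    Summable fun n : ι → ℤ => f (intVec n) :=
  summable_of_isBigO (summable_norm_intVec_rpow hb)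
    (hf.comp_tendsto tendsto_intVec_cofinite_cocompact)

/-- The Fourier transform on `ℝ^ι` with respect to the dot product. Mathlib's `𝓕` is not available
here, since `ι → ℝ` carries the sup norm and so is not an inner product space. -/
def piFourier [NormedAddCommGroup E] [NormedSpace ℂ E] (f : (ι → ℝ) → E) : (ι → ℝ) → E :=
  VectorFourier.fourierIntegral 𝐞 volume (dotProductBilin ℝ ℝ) f

lemma piFourier_apply [NormedAddCommGroup E] [NormedSpace ℂ E] (f : (ι → ℝ) → E) (w : ι → ℝ) :
    piFourier f w = ∫ x, 𝐞 (-(x ⬝ᵥ w)) • f x :=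
  rfl

lemma mFourier_toTorus (m : ι → ℤ) (x : ι → ℝ) :
    mFourier m (toTorus x) = 𝐞 (x ⬝ᵥ intVec m) := by
  simp only [mFourier, ContinuousMap.coe_mk, toTorus_apply, fourier_coe_apply,
    Real.fourierChar_apply, dotProduct, intVec_apply, ← Complex.exp_sum]
  push_cast
  rw [Finset.mul_sum, Finset.sum_mul]
  congr 1
  exact Finset.sum_congr rfl fun i _ => by ring

section Poisson

variable {f : C(ι → ℝ, ℂ)}

theorem mFourierCoeff_torusPeriodization
    (hf : ∀ K : Compacts (ι → ℝ), Summable fun n : ι → ℤ =>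
      ‖(f.comp (ContinuousMap.addRight (intVec n))).restrict K‖)
    (m : ι → ℤ) :
    mFourierCoeff (torusPeriodization f) m = piFourier f (intVec m) := by
  set g : C(ι → ℝ, ℂ) := (mFourier (-m)).comp toTorus * f with hg
  have hgsum (K : Compacts (ι → ℝ)) : Summable fun n : ι → ℤ =>
      ‖(g.comp (ContinuousMap.addRight (intVec n))).restrict K‖ := by
    simp only [hg, comp_toTorus_mul_comp_addRight]
    exact ((hf K).mul_left _).of_nonneg_of_le (fun n => norm_nonneg _)
      fun n => norm_restrict_comp_toTorus_mul_le _ _ K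
  calc mFourierCoeff (torusPeriodization f) m
      = ∫ x in unitCube ι, mFourier (-m) (toTorus x) • torusPeriodization f (toTorus x) := by
        rw [mFourierCoeff_eq_integral _ m 0]
        simp only [Pi.zero_apply, zero_add]
        rfl
    _ = ∫ x in unitCube ι, periodization g x := by
        rw [periodization_comp_toTorus_mul _ (ContinuousMap.summable_of_locally_summable_norm hf)]
        simp
    _ = ∫ x, g x := setIntegral_unitCube_periodization hgsum
    _ = piFourier f (intVec m) := by
        simp [g, piFourier_apply, mFourier_toTorus, Circle.smul_def]

theorem tsum_add_intVec_eq_tsum_piFourier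
    (hf : ∀ K : Compacts (ι → ℝ), Summable fun n : ι → ℤ =>
      ‖(f.comp (ContinuousMap.addRight (intVec n))).restrict K‖)
    (hsum : Summable fun m : ι → ℤ => piFourier f (intVec m)) (x : ι → ℝ) :
    ∑' n : ι → ℤ, f (x + intVec n) =
      ∑' m : ι → ℤ, piFourier f (intVec m) * 𝐞 (x ⬝ᵥ intVec m) := by
  have hcoeff := mFourierCoeff_torusPeriodization hf
  have key := hasSum_mFourier_series_apply_of_summable (f := torusPeriodization f)
    (hsum.congr fun m => (hcoeff m).symm) (toTorus x)
  simp only [hcoeff, mFourier_toTorus, smul_eq_mul, torusPeriodization_toTorus] at key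
  rw [key.tsum_eq, periodization,
    ← ContinuousMap.tsum_apply (ContinuousMap.summable_of_locally_summable_norm hf)]
  simp only [ContinuousMap.comp_apply, ContinuousMap.coe_addRight]

theorem tsum_intVec_eq_tsum_piFourier_of_isBigO {b : ℝ} (hb : Fintype.card ι < b)
    (hf : f =O[cocompact (ι → ℝ)] fun x => ‖x‖ ^ (-b))
    (hsum : Summable fun m : ι → ℤ => piFourier f (intVec m)) :
    ∑' n : ι → ℤ, f (intVec n) = ∑' m : ι → ℤ, piFourier f (intVec m) := by
  have hb₀ : 0 ≤ b := hb.le.trans' (Nat.cast_nonneg _)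
  have hK (K : Compacts (ι → ℝ)) := summable_comp_intVec_of_isBigO hb
    (isBigO_norm_restrict_comp_addRight f hb₀ hf K)
  simpa only [zero_add, zero_dotProduct, AddChar.map_zero_eq_one, Circle.coe_one, mul_one]
    using tsum_add_intVec_eq_tsum_piFourier hK hsum 0

end Poisson

end PoissonSummation

section Gaussian

open MeasureTheory Filter Asymptotics
open scoped FourierTransform

variable {ι : Type*} [Fintype ι]

section ChangeOfVariables

variable {E : Type*} [NormedAddCommGroup E] [DecidableEq ι] {A : Matrix ι ι ℝ}

lemma mulVec_injective_of_det_ne_zero (hA : A.det ≠ 0) : Function.Injective A.mulVec :=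
  Matrix.mulVec_injective_iff_isUnit.2 ((Matrix.isUnit_iff_isUnit_det A).2 hA.isUnit)

lemma isBigO_comp_mulVec (hA : A.det ≠ 0) {f : (ι → ℝ) → E} {b : ℝ} (hb : 0 ≤ b)
    (hf : f =O[cocompact (ι → ℝ)] fun x => ‖x‖ ^ (-b)) :
    (fun x => f (A.mulVec x)) =O[cocompact (ι → ℝ)] fun x => ‖x‖ ^ (-b) := by
  obtain ⟨K, hK, hAK⟩ := A.mulVecLin.exists_antilipschitzWith
    (LinearMap.ker_eq_bot.2 (mulVec_injective_of_det_ne_zero hA))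
  have htend : Tendsto A.mulVec (cocompact (ι → ℝ)) (cocompact (ι → ℝ)) := by
    rw [← Metric.cobounded_eq_cocompact]
    exact hAK.tendsto_cobounded
  refine (hf.comp_tendsto htend).trans (IsBigO.of_bound ((K : ℝ) ^ b) ?_)
  have hlarge : ∀ᶠ x in cocompact (ι → ℝ), 0 < ‖x‖ :=
    tendsto_norm_cocompact_atTop.eventually_gt_atTop 0
  filter_upwards [hlarge] with x hx
  have hKpos : (0 : ℝ) < K := NNReal.coe_pos.2 hK
  have hle : ‖x‖ ≤ K * ‖A.mulVec x‖ := hAK.le_mul_norm (map_zero _) x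
  have hApos : 0 < ‖A.mulVec x‖ := pos_of_mul_pos_right (hx.trans_le hle) hKpos.le
  rw [Function.comp_apply, Real.norm_of_nonneg (by positivity), Real.norm_of_nonneg (by positivity)]
  calc ‖A.mulVec x‖ ^ (-b) = K ^ b * (K * ‖A.mulVec x‖) ^ (-b) := by
        rw [Real.mul_rpow hKpos.le hApos.le, Real.rpow_neg hKpos.le,
          mul_inv_cancel_left₀ (Real.rpow_pos_of_pos hKpos b).ne']
    _ ≤ K ^ b * ‖x‖ ^ (-b) := by
        gcongr K ^ b * ?_
        exact Real.rpow_le_rpow_of_nonpos hx hle (neg_nonpos.2 hb)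

variable [NormedSpace ℝ E]

lemma integral_comp_mulVec (hA : A.det ≠ 0) (f : (ι → ℝ) → E) :
    ∫ x, f (A.mulVec x) = |A.det|⁻¹ • ∫ x, f x := by
  have hemb : MeasurableEmbedding (Matrix.toLin' A) :=
    (LinearMap.continuous_of_finiteDimensional _).measurableEmbedding
      (mulVec_injective_of_det_ne_zero hA)
  rw [← abs_inv, ← ENNReal.toReal_ofReal (abs_nonneg _), ← integral_smul_measure,
    ← Real.map_matrix_volume_pi_eq_smul_volume_pi hA, hemb.integral_map]
  rfl

end ChangeOfVariables

lemma piFourier_comp_mulVec {E : Type*} [NormedAddCommGroup E] [NormedSpace ℂ E] [DecidableEq ι]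
    {A : Matrix ι ι ℝ} (hA : A.det ≠ 0) (f : (ι → ℝ) → E) (w : ι → ℝ) :
    piFourier (fun x => f (A.mulVec x)) w =
      |A.det|⁻¹ • piFourier f (A⁻¹.transpose.mulVec w) := by
  have hdot (x : ι → ℝ) : x ⬝ᵥ w = A.mulVec x ⬝ᵥ A⁻¹.transpose.mulVec w := by
    rw [Matrix.mulVec_transpose, dotProduct_comm _ (Matrix.vecMul _ _),
      ← Matrix.dotProduct_mulVec, Matrix.mulVec_mulVec, Matrix.nonsing_inv_mul _ hA.isUnit,
      Matrix.one_mulVec, dotProduct_comm]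
  simp only [piFourier_apply, hdot]
  exact integral_comp_mulVec hA fun x => 𝐞 (-(x ⬝ᵥ A⁻¹.transpose.mulVec w)) • f x

/-- The Gaussian `x ↦ exp (π i ∑ j, x j ^ 2 * z j)` on `ℝ^ι`, whose sum over a lattice is the theta
series of that lattice at `z`. -/
def gaussian (z : ι → ℂ) (x : ι → ℝ) : ℂ :=
  cexp ((Real.pi : ℂ) * I * ∑ j, (x j : ℂ) ^ 2 * z j)

lemma continuous_gaussian (z : ι → ℂ) : Continuous (gaussian z) := by
  unfold gaussian
  fun_prop

lemma norm_gaussian (z : ι → ℂ) (x : ι → ℝ) :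
    ‖gaussian z x‖ = Real.exp (-(Real.pi * ∑ j, x j ^ 2 * (z j).im)) := by
  have him (j : ι) : ((x j : ℂ) ^ 2 * z j).im = x j ^ 2 * (z j).im := by
    rw [← ofReal_pow, im_ofReal_mul]
  simp [gaussian, Complex.norm_exp, Complex.mul_re, Complex.im_sum, him]

lemma norm_sq_le_sum_sq (x : ι → ℝ) : ‖x‖ ^ 2 ≤ ∑ j, x j ^ 2 := by
  refine Real.le_sqrt (norm_nonneg _) (by positivity) |>.1 ?_
  refine (pi_norm_le_iff_of_nonneg (Real.sqrt_nonneg _)).2 fun i => ?_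
  exact Real.abs_le_sqrt (Finset.single_le_sum (fun j _ => sq_nonneg (x j)) (Finset.mem_univ i))

lemma exists_norm_gaussian_le {z : ι → ℂ} (hz : ∀ j, 0 < (z j).im) :
    ∃ c > 0, ∀ x : ι → ℝ, ‖gaussian z x‖ ≤ Real.exp (-c * ‖x‖ ^ 2) := by
  obtain ⟨ε, hε, hεz⟩ : ∃ ε > 0, ∀ j, ε ≤ (z j).im := by
    rcases isEmpty_or_nonempty ι with _ | _
    · exact ⟨1, one_pos, isEmptyElim⟩
    · obtain ⟨j, hj⟩ := Finite.exists_min fun j => (z j).im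
      exact ⟨(z j).im, hz j, hj⟩
  refine ⟨Real.pi * ε, by positivity, fun x => ?_⟩
  rw [norm_gaussian, Real.exp_le_exp, neg_mul, neg_le_neg_iff, mul_assoc]
  gcongr
  calc ε * ‖x‖ ^ 2 ≤ ε * ∑ j, x j ^ 2 := by gcongr; exact norm_sq_le_sum_sq x
    _ = ∑ j, x j ^ 2 * ε := by rw [Finset.mul_sum]; simp only [mul_comm]
    _ ≤ ∑ j, x j ^ 2 * (z j).im := by gcongr with j; exact hεz j

lemma isBigO_gaussian {z : ι → ℂ} (hz : ∀ j, 0 < (z j).im) (s : ℝ) :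
    gaussian z =O[cocompact (ι → ℝ)] fun x => ‖x‖ ^ s := by
  obtain ⟨c, hc, hle⟩ := exists_norm_gaussian_le hz
  have hexp : (fun r : ℝ => Real.exp (-c * r ^ 2)) =O[atTop] fun r => r ^ s := by
    simpa using (rexp_neg_quadratic_isLittleO_rpow_atTop (neg_lt_zero.2 hc) 0 s).isBigO
  refine (IsBigO.of_bound 1 (Eventually.of_forall fun x => ?_)).trans
    (hexp.comp_tendsto (tendsto_norm_cocompact_atTop (E := ι → ℝ)))
  simpa using hle x

lemma neg_one_div_im_pos {z : ℂ} (hz : 0 < z.im) : 0 < (-1 / z).im := by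
  have hz₀ : z ≠ 0 := by
    rintro rfl
    simp at hz
  rw [neg_div, one_div, neg_im, inv_im, neg_div, neg_neg]
  exact div_pos hz (normSq_pos.2 hz₀)

lemma neg_one_div_sq_mul_im_pos {x : ℝ} (hx : x ≠ 0) {z : ℂ} (hz : 0 < z.im) :
    0 < (-1 / ((x : ℂ) ^ 2 * z)).im := by
  refine neg_one_div_im_pos ?_
  rw [← ofReal_pow, im_ofReal_mul]
  positivity

lemma pi_div_cpow {z : ℂ} (hz : 0 < z.im) :
    ((Real.pi : ℂ) / -(Real.pi * I * z)) ^ (1 / 2 : ℂ) = (-I * z) ^ (-(1 / 2) : ℂ) := by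
  have hinv : (Real.pi : ℂ) / -(Real.pi * I * z) = (-I * z)⁻¹ := by
    rw [show -((Real.pi : ℂ) * I * z) = Real.pi * (-I * z) by ring,
      div_mul_cancel_left₀ (ofReal_ne_zero.2 Real.pi_ne_zero)]
  have harg : (-I * z).arg ≠ Real.pi := fun h => by
    have hre : (-I * z).re = z.im := by simp
    exact (arg_eq_pi_iff.1 h).1.not_gt (hre ▸ hz)
  rw [hinv, inv_cpow _ _ harg, cpow_neg]

lemma piFourier_gaussian {z : ι → ℂ} (hz : ∀ j, 0 < (z j).im) (w : ι → ℝ) :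
    piFourier (gaussian z) w =
      (∏ j, (-I * z j) ^ (-(1 / 2) : ℂ)) * gaussian (fun j => -1 / z j) w := by
  set b : ι → ℂ := fun j => -(Real.pi * I * z j) with hb
  have hbre (j : ι) : 0 < (b j).re := by
    have : (b j).re = Real.pi * (z j).im := by simp [hb]
    rw [this]
    exact mul_pos Real.pi_pos (hz j)
  have hintegrand (x : ι → ℝ) : 𝐞 (-(x ⬝ᵥ w)) • gaussian z x =
      cexp (-∑ j, b j * (x j : ℂ) ^ 2 + ∑ j, -(2 * Real.pi * I * w j) * x j) := by
    rw [gaussian, Circle.smul_def, Real.fourierChar_apply, smul_eq_mul, ← Complex.exp_add]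
    congr 1
    simp only [hb, dotProduct]
    push_cast
    simp only [Finset.mul_sum, Finset.sum_mul, neg_mul, Finset.sum_neg_distrib, mul_neg]
    rw [neg_neg, add_comm]
    congr 2
    · exact funext fun j => by ring
    · exact Finset.sum_congr rfl fun j _ => by ring
  have hexponent (j : ι) : (-(2 * Real.pi * I * w j)) ^ 2 / (4 * b j) =
      (Real.pi : ℂ) * I * ((w j : ℂ) ^ 2 * (-1 / z j)) := by
    have hz₀ : z j ≠ 0 := fun h => (hz j).ne' (by simp [h])
    simp only [hb]
    field_simp
    ring_nf
  simp only [piFourier_apply, hintegrand, GaussianFourier.integral_cexp_neg_sum_mul_add hbre]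
  rw [Finset.prod_mul_distrib, ← Complex.exp_sum, gaussian, Finset.mul_sum]
  simp only [hexponent]
  simp only [hb, pi_div_cpow (hz _)]

theorem tsum_gaussian_mulVec_intVec [DecidableEq ι] {A : Matrix ι ι ℝ} (hA : A.det ≠ 0)
    {z : ι → ℂ} (hz : ∀ j, 0 < (z j).im) :
    ∑' n : ι → ℤ, gaussian z (A.mulVec (intVec n)) =
      (∏ j, (-I * z j) ^ (-(1 / 2) : ℂ)) * (|A.det|⁻¹ : ℝ) *
        ∑' m : ι → ℤ, gaussian (fun j => -1 / z j) (A⁻¹.transpose.mulVec (intVec m)) := by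
  have hdecay {B : Matrix ι ι ℝ} (hB : B.det ≠ 0) {y : ι → ℂ} (hy : ∀ j, 0 < (y j).im) :
      (fun x => gaussian y (B.mulVec x)) =O[cocompact (ι → ℝ)]
        fun x => ‖x‖ ^ (-(Fintype.card ι + 1 : ℝ)) :=
    isBigO_comp_mulVec hB (by positivity) (isBigO_gaussian hy _)
  have hcard : (Fintype.card ι : ℝ) < Fintype.card ι + 1 := lt_add_one _
  let f : C(ι → ℝ, ℂ) :=
    ⟨fun x => gaussian z (A.mulVec x), (continuous_gaussian z).comp (by fun_prop)⟩
  have hfourier (m : ι → ℤ) : piFourier f (intVec m) =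
      (∏ j, (-I * z j) ^ (-(1 / 2) : ℂ)) * (|A.det|⁻¹ : ℝ) *
        gaussian (fun j => -1 / z j) (A⁻¹.transpose.mulVec (intVec m)) := by
    rw [ContinuousMap.coe_mk, piFourier_comp_mulVec hA, piFourier_gaussian hz, real_smul]
    ring
  have hA' : A⁻¹.transpose.det ≠ 0 := by simpa using hA
  have hsum : Summable fun m : ι → ℤ => piFourier f (intVec m) := by
    simp only [hfourier]
    exact (summable_comp_intVec_of_isBigO hcard
      (hdecay hA' fun j => neg_one_div_im_pos (hz j))).mul_left _
  rw [← tsum_mul_left, ← tsum_congr hfourier]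
  exact tsum_intVec_eq_tsum_piFourier_of_isBigO hcard (hdecay hA hz) hsum

end Gaussian

section NumberField

open Module nonZeroDivisors

variable {F ι κ : Type*} [Field F]

/-- The image of `x` in `ℝ^ι` under a family `σ` of real embeddings of a field. -/
def embeddingVec (σ : ι → F →+* ℝ) (x : F) : ι → ℝ :=
  fun j => σ j x

lemma gaussian_embeddingVec_div [Fintype ι] (σ : ι → F →+* ℝ) (y : ι → ℂ) (x d : F) :
    gaussian y (embeddingVec σ (x / d)) =
      gaussian (fun j => y j / (σ j d : ℂ) ^ 2) (embeddingVec σ x) := by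
  simp only [gaussian, embeddingVec, map_div₀, ofReal_div, div_pow, div_mul_eq_mul_div,
    mul_div_assoc]

/-- The matrix whose columns are the images in `ℝ^ι` of a family `c` of field elements. -/
def embeddingMatrix (σ : ι → F →+* ℝ) (c : κ → F) : Matrix ι κ ℝ :=
  .of fun j i => σ j (c i)

lemma embeddingMatrix_mulVec_intVec [Fintype κ] (σ : ι → F →+* ℝ) (c : κ → F) (n : κ → ℤ) :
    (embeddingMatrix σ c).mulVec (intVec n) = embeddingVec σ (∑ i, n i • c i) := by
  ext j
  simp [embeddingMatrix, embeddingVec, Matrix.mulVec, dotProduct, mul_comm]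

lemma tsum_embeddingMatrix_mulVec_intVec [CharZero F] [Fintype κ] {M : Type*} [AddCommMonoid M]
    [TopologicalSpace M] (σ : ι → F →+* ℝ) (c : Basis κ ℚ F) (g : (ι → ℝ) → M) :
    ∑' n : κ → ℤ, g ((embeddingMatrix σ c).mulVec (intVec n)) =
      ∑' x : Submodule.span ℤ (Set.range c), g (embeddingVec σ x) := by
  rw [← (c.restrictScalars ℤ).equivFun.symm.toEquiv.tsum_eq]
  refine tsum_congr fun n => ?_
  simp [embeddingMatrix_mulVec_intVec, Basis.equivFun_symm_apply]

section TotallyReal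

variable [NumberField F] [Fintype ι] {σ : ι → F →+* ℝ}

lemma trace_eq_sum_of_bijective
    (hσ : Function.Bijective fun i => (ofRealHom.comp (σ i) : F →+* ℂ)) (x : F) :
    (Algebra.trace ℚ F x : ℝ) = ∑ j, σ j x := by
  let e : ι ≃ (F →ₐ[ℚ] ℂ) := (Equiv.ofBijective _ hσ).trans (RingHom.equivRatAlgHom F ℂ)
  have he : ∑ j, (σ j x : ℂ) = ∑ φ : F →ₐ[ℚ] ℂ, φ x :=
    Fintype.sum_equiv e _ _ fun _ => rfl
  apply ofReal_injective
  rw [ofReal_sum, he, ← trace_eq_sum_embeddings ℂ]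
  simp

lemma embeddingMatrix_transpose_mul
    (hσ : Function.Bijective fun i => (ofRealHom.comp (σ i) : F →+* ℂ)) (c d : κ → F) :
    (embeddingMatrix σ c).transpose * embeddingMatrix σ d =
      .of fun i k => (Algebra.trace ℚ F (c i * d k) : ℝ) := by
  ext i k
  simp [embeddingMatrix, Matrix.mul_apply, trace_eq_sum_of_bijective hσ]

variable [DecidableEq ι]

lemma det_embeddingMatrix_sq
    (hσ : Function.Bijective fun i => (ofRealHom.comp (σ i) : F →+* ℂ)) (c : ι → F) :
    (embeddingMatrix σ c).det ^ 2 = (Algebra.discr ℚ c : ℝ) := by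
  have htrace : (embeddingMatrix σ c).transpose * embeddingMatrix σ c =
      (Rat.castHom ℝ).mapMatrix (Algebra.traceMatrix ℚ c) :=
    embeddingMatrix_transpose_mul hσ c c
  rw [Algebra.discr_def, ← Rat.coe_castHom, RingHom.map_det, ← htrace, Matrix.det_mul,
    Matrix.det_transpose, sq]

lemma discr_pos_of_bijective
    (hσ : Function.Bijective fun i => (ofRealHom.comp (σ i) : F →+* ℂ)) (c : Basis ι ℚ F) :
    0 < Algebra.discr ℚ c := by
  have hnonneg : (0 : ℝ) ≤ Algebra.discr ℚ c := by
    rw [← det_embeddingMatrix_sq hσ]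
    positivity
  exact (Rat.cast_nonneg.1 hnonneg).lt_of_ne' (Algebra.discr_not_zero_of_basis ℚ c)

lemma abs_det_embeddingMatrix_inv
    (hσ : Function.Bijective fun i => (ofRealHom.comp (σ i) : F →+* ℂ)) (c : Basis ι ℚ F) :
    ((|(embeddingMatrix σ c).det|⁻¹ : ℝ) : ℂ) = (Algebra.discr ℚ c : ℂ) ^ (-(1 / 2) : ℂ) := by
  have hdiscr : (0 : ℝ) ≤ Algebra.discr ℚ c := Rat.cast_nonneg.2 (discr_pos_of_bijective hσ c).le
  rw [← Real.sqrt_sq_eq_abs, det_embeddingMatrix_sq hσ, Real.sqrt_eq_rpow,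
    ← Real.rpow_neg hdiscr, ofReal_cpow hdiscr]
  norm_num

lemma embeddingMatrix_traceDual
    (hσ : Function.Bijective fun i => (ofRealHom.comp (σ i) : F →+* ℂ)) (c : Basis ι ℚ F) :
    embeddingMatrix σ c.traceDual = (embeddingMatrix σ c)⁻¹.transpose := by
  rw [Matrix.transpose_nonsing_inv]
  refine (Matrix.inv_eq_right_inv ?_).symm
  rw [embeddingMatrix_transpose_mul hσ]
  ext i k
  rw [Matrix.of_apply, Basis.trace_mul_traceDual, Matrix.one_apply, apply_ite (Rat.cast (K := ℝ)),
    Rat.cast_one, Rat.cast_zero]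

theorem tsum_gaussian_span
    (hσ : Function.Bijective fun i => (ofRealHom.comp (σ i) : F →+* ℂ)) (c : Basis ι ℚ F)
    {z : ι → ℂ} (hz : ∀ j, 0 < (z j).im) :
    ∑' x : Submodule.span ℤ (Set.range c), gaussian z (embeddingVec σ x) =
      (∏ j, (-I * z j) ^ (-(1 / 2) : ℂ)) * (Algebra.discr ℚ c : ℂ) ^ (-(1 / 2) : ℂ) *
        ∑' x : Submodule.span ℤ (Set.range c.traceDual),
          gaussian (fun j => -1 / z j) (embeddingVec σ x) := by
  have hdet : (embeddingMatrix σ c).det ≠ 0 := fun h => by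
    have hsq := det_embeddingMatrix_sq hσ c
    rw [h, zero_pow two_ne_zero, eq_comm, Rat.cast_eq_zero] at hsq
    exact (discr_pos_of_bijective hσ c).ne' hsq
  rw [← tsum_embeddingMatrix_mulVec_intVec σ c, ← tsum_embeddingMatrix_mulVec_intVec σ c.traceDual,
    embeddingMatrix_traceDual hσ, ← abs_det_embeddingMatrix_inv hσ]
  exact tsum_gaussian_mulVec_intVec hdet hz

end TotallyReal

variable [NumberField F]

lemma exists_basis_span_eq_ringOfIntegers [Fintype ι] [DecidableEq ι]
    (hι : Fintype.card ι = finrank ℚ F) :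
    ∃ c : Basis ι ℚ F,
      (1 : Submodule (𝓞 F) F).restrictScalars ℤ = Submodule.span ℤ (Set.range c) ∧
        Algebra.discr ℚ c = discr F := by
  have hcard : Fintype.card (Free.ChooseBasisIndex ℤ (𝓞 F)) = Fintype.card ι := by
    rw [← finrank_eq_card_chooseBasisIndex, RingOfIntegers.rank, hι]
  let e := Fintype.equivOfCardEq hcard
  refine ⟨(integralBasis F).reindex e, ?_, ?_⟩
  · ext x
    rw [Basis.range_reindex, mem_span_integralBasis, Submodule.restrictScalars_mem,
      Submodule.mem_one, RingHom.mem_range]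
  · rw [coe_discr, Basis.coe_reindex]
    exact Algebra.discr_reindex ℚ (integralBasis F) e

theorem theta_series_transformation_general [Fintype ι] {σ : ι → F →+* ℝ}
    (hσ : Function.Bijective fun i => (ofRealHom.comp (σ i) : F →+* ℂ))
    {z : ι → ℂ} (hz : ∀ j, 0 < (z j).im) :
    ∑' v : 𝓞 F, gaussian z (embeddingVec σ v) =
      (∏ j, (-I * z j) ^ (-(1 / 2) : ℂ)) * (discr F : ℂ) ^ (-(1 / 2) : ℂ) *
        ∑' x : FractionalIdeal.dual ℤ ℚ (1 : FractionalIdeal (𝓞 F)⁰ F),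
          gaussian (fun j => -1 / z j) (embeddingVec σ x) := by
  classical
  have hι : Fintype.card ι = finrank ℚ F := by
    rw [← Embeddings.card F ℂ, Fintype.card_of_bijective hσ]
  obtain ⟨c, hc, hdiscr⟩ := exists_basis_span_eq_ringOfIntegers hι
  have hspan : Set.range (algebraMap (𝓞 F) F) = Submodule.span ℤ (Set.range c) := by
    rw [← hc]
    ext x
    simp
  have hdual : (FractionalIdeal.dual ℤ ℚ (1 : FractionalIdeal (𝓞 F)⁰ F) : Set F) =
      Submodule.span ℤ (Set.range c.traceDual) := by
    rw [← Submodule.traceDual_span_of_basis ℤ 1 c hc, ← FractionalIdeal.coe_dual_one]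
    rfl
  have hleft : ∑' v : 𝓞 F, gaussian z (embeddingVec σ v) =
      ∑' x : Submodule.span ℤ (Set.range c), gaussian z (embeddingVec σ x) :=
    (tsum_range (fun x : F => gaussian z (embeddingVec σ x))
      RingOfIntegers.coe_injective).symm.trans
        (tsum_congr_set_coe (fun x => gaussian z (embeddingVec σ x)) hspan)
  have hright : ∑' x : FractionalIdeal.dual ℤ ℚ (1 : FractionalIdeal (𝓞 F)⁰ F),
      gaussian (fun j => -1 / z j) (embeddingVec σ x) =
        ∑' x : Submodule.span ℤ (Set.range c.traceDual),
          gaussian (fun j => -1 / z j) (embeddingVec σ x) :=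
    tsum_congr_set_coe (fun x => gaussian (fun j => -1 / z j) (embeddingVec σ x)) hdual
  rw [hleft, hright, tsum_gaussian_span hσ c hz, hdiscr, Rat.cast_intCast]

section PrincipalDifferent

variable {δ : 𝓞 F}

lemma coe_ne_zero_of_differentIdeal_eq_span (hδ : differentIdeal ℤ (𝓞 F) = Ideal.span {δ}) :
    (δ : F) ≠ 0 := by
  rw [RingOfIntegers.coe_ne_zero_iff]
  rintro rfl
  exact differentIdeal_ne_bot (A := ℤ) (B := 𝓞 F) (by simpa using hδ)

lemma range_div_eq_dual (hδ : differentIdeal ℤ (𝓞 F) = Ideal.span {δ}) :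
    Set.range (fun v : 𝓞 F => (v / δ : F)) =
      (FractionalIdeal.dual ℤ ℚ (1 : FractionalIdeal (𝓞 F)⁰ F) : Set F) := by
  have hdual := coeIdeal_differentIdeal ℤ ℚ F (𝓞 F)
  rw [hδ, FractionalIdeal.coeIdeal_span_singleton, eq_comm, inv_eq_iff_eq_inv,
    FractionalIdeal.spanSingleton_inv] at hdual
  ext x
  simp only [hdual, Set.mem_range, SetLike.mem_coe, FractionalIdeal.mem_spanSingleton,
    Algebra.smul_def, div_eq_mul_inv]

lemma tsum_dual_eq_tsum_div {M : Type*} [AddCommMonoid M] [TopologicalSpace M]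
    (hδ : differentIdeal ℤ (𝓞 F) = Ideal.span {δ}) (g : F → M) :
    ∑' x : FractionalIdeal.dual ℤ ℚ (1 : FractionalIdeal (𝓞 F)⁰ F), g x =
      ∑' v : 𝓞 F, g (v / δ) := by
  have hinj : Function.Injective fun v : 𝓞 F => (v / δ : F) :=
    fun v w hvw => RingOfIntegers.coe_injective
      ((div_left_inj' (coe_ne_zero_of_differentIdeal_eq_span hδ)).1 hvw)
  rw [← tsum_range g hinj]
  exact tsum_congr_set_coe g (range_div_eq_dual hδ).symm

lemma tsum_gaussian_dual_eq [Fintype ι] (σ : ι → F →+* ℝ)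
    (hδ : differentIdeal ℤ (𝓞 F) = Ideal.span {δ}) (y : ι → ℂ) :
    ∑' x : FractionalIdeal.dual ℤ ℚ (1 : FractionalIdeal (𝓞 F)⁰ F),
        gaussian y (embeddingVec σ x) =
      ∑' v : 𝓞 F, gaussian (fun j => y j / (σ j δ : ℂ) ^ 2) (embeddingVec σ v) := by
  rw [tsum_dual_eq_tsum_div hδ fun x => gaussian y (embeddingVec σ x)]
  exact tsum_congr fun v => gaussian_embeddingVec_div σ y v δ

end PrincipalDifferent

end NumberField

end

/-- Transformation formula for the theta series of a totally real number field
`F` of degree `r` with real embeddings `σ₁, …, σ_r`: if `δ ∈ 𝓞 F` generates the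
different ideal of `F/ℚ` and `D_F > 0` is the discriminant, then for any tuple
`z` in the product of upper half-planes, with `w_j = -1/(σ_j(δ)² z_j)` one has
`θ_F(z) = (∏_j (-i z_j)^{-1/2}) · D_F^{-1/2} · θ_F(w)` (principal branch powers),
and `w` again lies in the product of upper half-planes. -/
theorem theta_series_transformation
    (F : Type*) [Field F] [NumberField F] (r : ℕ)
    (σ : Fin r → (F →+* ℝ))
    (hσ : Function.Bijective
      (fun i : Fin r => (Complex.ofRealHom.comp (σ i) : F →+* ℂ)))
    (δ : 𝓞 F) (hδ : differentIdeal ℤ (𝓞 F) = Ideal.span {δ})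
    (hD : 0 < NumberField.discr F)
    (z : Fin r → ℂ) (hz : ∀ j, 0 < (z j).im) :
    (∀ j, 0 < ((-1) / ((σ j (δ : F) : ℂ) ^ 2 * z j)).im) ∧
    (∑' v : 𝓞 F, Complex.exp ((Real.pi : ℂ) * Complex.I *
        ∑ j, ((σ j (v : F) : ℂ)) ^ 2 * z j))
      = (∏ j, (-Complex.I * z j) ^ (-(1 / 2) : ℂ)) *
          ((NumberField.discr F : ℂ) ^ (-(1 / 2) : ℂ)) *
        (∑' v : 𝓞 F, Complex.exp ((Real.pi : ℂ) * Complex.I *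
          ∑ j, ((σ j (v : F) : ℂ)) ^ 2 *
            ((-1) / ((σ j (δ : F) : ℂ) ^ 2 * z j)))) := by
  refine ⟨fun j => neg_one_div_sq_mul_im_pos
    ((map_ne_zero (σ j)).2 (coe_ne_zero_of_differentIdeal_eq_span hδ)) (hz j), ?_⟩
  have htheta := theta_series_transformation_general hσ hz
  simp only [tsum_gaussian_dual_eq σ hδ, div_div, mul_comm (z _)] at htheta
  exact htheta
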